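/- Let T ≥ 1, let η_1 ≥ η_2 ≥ … ≥ η_T > 0 be a nonincreasing sequence of positive reals, and let a_1, …, a_T be arbitrary reals. Then | Σ_{t=1}^T a_t | ≤ (1/η_T) · max_{1 ≤ τ ≤ T} | Σ_{i=τ}^T η_i · a_i |. -/

import Mathlib

/-- If the tail sums of `η i * a i` are bounded by `M`, then a tail sum of `a` differs from the
weighted tail sum divided by its first weight by at most `(1 / η T - 1 / η m) * M`. -/
theorem abs_sum_Icc_sub_div_le {m T : ℕ} (hmT : m ≤ T) {η a : ℕ → ℝ} {M : ℝ}
    (hpos : ∀ t ∈ Finset.Icc m T, 0 < η t)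
    (hanti : AntitoneOn η (Finset.Icc m T))
    (hM : ∀ τ ∈ Finset.Icc m T, |∑ i ∈ Finset.Icc τ T, η i * a i| ≤ M) :
    |∑ t ∈ Finset.Icc m T, a t - (∑ i ∈ Finset.Icc m T, η i * a i) / η m| ≤
      (1 / η T - 1 / η m) * M := by
  induction hmT using Nat.decreasingInduction with
  | self =>
    have hT : η T ≠ 0 := (hpos T (by simp)).ne'
    simp [hT]
  | of_succ k hk ih =>
    have hsub : Finset.Icc (k + 1) T ⊆ Finset.Icc k T :=
      Finset.Icc_subset_Icc_left k.le_succ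
    have hmem : k ∈ Finset.Icc k T := Finset.left_mem_Icc.mpr hk.le
    have hmem' : k + 1 ∈ Finset.Icc k T := Finset.mem_Icc.mpr ⟨k.le_succ, hk⟩
    have h := ih (fun t ht => hpos t (hsub ht)) (hanti.mono (Finset.coe_subset.mpr hsub))
      (fun τ hτ => hM τ (hsub hτ))
    have hηk := hpos k hmem
    have hΔ : 0 ≤ 1 / η (k + 1) - 1 / η k :=
      sub_nonneg.mpr (one_div_le_one_div_of_le (hpos _ hmem')
        (hanti (Finset.mem_coe.mpr hmem) (Finset.mem_coe.mpr hmem') k.le_succ))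
    have hsplit (f : ℕ → ℝ) :
        ∑ i ∈ Finset.Icc k T, f i = f k + ∑ i ∈ Finset.Icc (k + 1) T, f i := by
      rw [← Finset.add_sum_Ioc_eq_sum_Icc hk.le, ← Finset.Icc_add_one_left_eq_Ioc]
    rw [hsplit a, hsplit fun i => η i * a i]
    have hS := hM (k + 1) hmem'
    set S := ∑ i ∈ Finset.Icc (k + 1) T, η i * a i
    set A := ∑ i ∈ Finset.Icc (k + 1) T, a i
    calc |a k + A - (η k * a k + S) / η k|
        = |(A - S / η (k + 1)) + (1 / η (k + 1) - 1 / η k) * S| := by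
          congr 1
          rw [add_div, mul_div_cancel_left₀ _ hηk.ne']
          ring
      _ ≤ |A - S / η (k + 1)| + (1 / η (k + 1) - 1 / η k) * |S| := by
          refine (abs_add_le _ _).trans_eq ?_
          rw [abs_mul, abs_of_nonneg hΔ]
      _ ≤ (1 / η T - 1 / η (k + 1)) * M + (1 / η (k + 1) - 1 / η k) * M := by
          gcongr
      _ = (1 / η T - 1 / η k) * M := by ring

/-- Abel-summation inequality: for a nonincreasing positive sequence `η` and arbitrary reals
`a`, `|Σ_{t=1}^T a t| ≤ (1/η_T) max_{1 ≤ τ ≤ T} |Σ_{i=τ}^T η i * a i|`. -/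
theorem abel_summation_inequality
    (T : ℕ) (hT : 1 ≤ T) (η a : ℕ → ℝ)
    (hηpos : ∀ t ∈ Finset.Icc 1 T, 0 < η t)
    (hηdec : ∀ s t, 1 ≤ s → s ≤ t → t ≤ T → η t ≤ η s) :
    |∑ t ∈ Finset.Icc 1 T, a t| ≤
      (1 / η T) *
        (Finset.Icc 1 T).sup' (Finset.nonempty_Icc.mpr hT)
          (fun τ => |∑ i ∈ Finset.Icc τ T, η i * a i|) := by
  set M := (Finset.Icc 1 T).sup' (Finset.nonempty_Icc.mpr hT)
    (fun τ => |∑ i ∈ Finset.Icc τ T, η i * a i|)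
  have hM : ∀ τ ∈ Finset.Icc 1 T, |∑ i ∈ Finset.Icc τ T, η i * a i| ≤ M := fun τ hτ =>
    Finset.le_sup' (fun τ => |∑ i ∈ Finset.Icc τ T, η i * a i|) hτ
  have hanti : AntitoneOn η (Finset.Icc 1 T) := fun s hs t ht hst =>
    hηdec s t (Finset.mem_Icc.mp hs).1 hst (Finset.mem_Icc.mp ht).2
  have hmem : 1 ∈ Finset.Icc 1 T := Finset.left_mem_Icc.mpr hT
  have h := abs_sum_Icc_sub_div_le hT hηpos hanti hM
  have hη := hηpos 1 hmem
  have hfirst : |(∑ i ∈ Finset.Icc 1 T, η i * a i) / η 1| ≤ 1 / η 1 * M := by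
    rw [abs_div, abs_of_pos hη, div_eq_mul_one_div, mul_comm]
    gcongr
    exact hM 1 hmem
  have htri := abs_sub_abs_le_abs_sub (∑ t ∈ Finset.Icc 1 T, a t)
    ((∑ i ∈ Finset.Icc 1 T, η i * a i) / η 1)
  linarith
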